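/- arXiv:1312.1653 — 3 statements merged into one kernel-verified Lean document; each statement's English description precedes it below -/
import Mathlib

section
/- Let n ≥ 3, let Σ be an n×n real positive definite matrix, let k ∈ ℝ^n be such that the (n+1)×(n+1) block matrix Δ := [[1, kᵀ], [k, Σ]] is positive definite, and let y ∈ ℝ^n not be a scalar multiple of the all-ones vector 𝟙. For m > 0 and 0 < ε < 1 define g_{m,ε}(z) := [∫_{−m}^{m} ∫_{ε}^{1/ε} v^{−(n+1)} exp(−(1/(2v²)) ((z,y) − u𝟙)ᵀ Δ⁻¹ ((z,y) − u𝟙)) dv du] / [∫_ℝ ∫_{−m}^{m} ∫_{ε}^{1/ε} v^{−(n+1)} exp(−(1/(2v²)) ((z',y) − u𝟙)ᵀ Δ⁻¹ ((z',y) − u𝟙)) dv du dz']. Then for every z ∈ ℝ and all sequences m_j → ∞ and ε_j → 0⁺, g_{m_j, ε_j}(z) converges to the density at z of the univariate Student distribution with ν = n − 2 degrees of freedom, location parameter μ + kᵀ Σ⁻¹ (y − μ𝟙), where μ := (𝟙ᵀ Σ⁻¹ y)/(𝟙ᵀ Σ⁻¹ 𝟙), and scale parameter s := sqrt( (1/(n−2))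 ((y − μ𝟙)ᵀ Σ⁻¹ y) (1 − kᵀ Σ⁻¹ k + (1 − 𝟙ᵀ Σ⁻¹ k)² / (𝟙ᵀ Σ⁻¹ 𝟙)) ). -/
open Matrix MeasureTheory Real Filter

/-!
The quadratic form in the weight is, by the Schur complement and completion of the square in `u`, a
square in `u` plus a square in `z` centred at the universal kriging predictor, plus the generalized
least-squares residual of `y`. Integrating out either square only contributes a factor proportional
to `v`, and what remains is a Gamma integral in `v⁻²`; the quotient of the integral over `u` and `v`
by the one over `z`, `u` and `v` is the Student density. The weight is integrable over all `z`, `u`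
and `v > 0`, so the truncated integrals converge to the full ones.
-/

open scoped Topology

section Truncation

variable {α β ι : Type*} [MeasurableSpace α] [MeasurableSpace β] {μ : Measure α} {ν : Measure β}
  {l : Filter ι}

lemma aecover_prod [SFinite ν] {φ : ι → Set α} {ψ : ι → Set β} (hφ : AECover μ l φ)
    (hψ : AECover ν l ψ) : AECover (μ.prod ν) l fun i => φ i ×ˢ ψ i where
  ae_eventually_mem := by
    filter_upwards [Measure.quasiMeasurePreserving_fst.ae hφ.ae_eventually_mem,
      Measure.quasiMeasurePreserving_snd.ae hψ.ae_eventually_mem] with p hp₁ hp₂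
    exact hp₁.and hp₂
  measurableSet i := (hφ.measurableSet i).prod (hψ.measurableSet i)

lemma tendsto_integral_setIntegral_of_aecover [SFinite μ] [SFinite ν] [l.IsCountablyGenerated]
    {ψ : ι → Set β} (hψ : AECover ν l ψ) {f : α → β → ℝ}
    (hf : Integrable (Function.uncurry f) (μ.prod ν)) :
    Tendsto (fun i => ∫ x, ∫ y in ψ i, f x y ∂ν ∂μ) l (𝓝 (∫ x, ∫ y, f x y ∂ν ∂μ)) := by
  have huniv : AECover μ l fun _ => Set.univ := ⟨by simp, fun _ => .univ⟩
  rw [integral_integral hf]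
  refine ((aecover_prod huniv hψ).integral_tendsto_of_countably_generated hf).congr fun i => ?_
  rw [setIntegral_prod _ hf.integrableOn, setIntegral_univ]
  rfl

/-- The integral of `F u v` over a mean `|u| ≤ m` and a scale `ε ≤ v ≤ 1 / ε`. -/
noncomputable def truncatedIntegral (F : ℝ → ℝ → ℝ) (m ε : ℝ) : ℝ :=
  ∫ u in (-m)..m, ∫ v in ε..(1 / ε), F u v

lemma aecover_Ioc_prod_Ioc : AECover ((volume : Measure ℝ).prod (volume.restrict (Set.Ioi (0 : ℝ))))
    (atTop ×ˢ 𝓝[>] (0 : ℝ)) fun p => Set.Ioc (-p.1) p.1 ×ˢ Set.Ioc p.2 (1 / p.2) := by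
  have hε : Tendsto (fun p : ℝ × ℝ => p.2) (atTop ×ˢ 𝓝[>] 0) (𝓝[>] 0) := tendsto_snd
  have hscale : AECover (volume.restrict (Set.Ioi (0 : ℝ))) (atTop ×ˢ 𝓝[>] (0 : ℝ))
      fun p => Set.Ioi p.2 ∩ Set.Iic (1 / p.2) :=
    (aecover_Ioi_of_Ioi (hε.mono_right nhdsWithin_le_nhds)).inter
      (aecover_Iic <| by simpa only [one_div] using! tendsto_inv_nhdsGT_zero.comp hε)
  exact aecover_prod (aecover_Ioc (tendsto_neg_atTop_atBot.comp tendsto_fst) tendsto_fst)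
    (by simpa only [Set.Ioi_inter_Iic] using hscale)

lemma truncatedIntegral_eq_setIntegral {F : ℝ → ℝ → ℝ}
    (hF : Integrable (Function.uncurry F) (volume.prod (volume.restrict (Set.Ioi 0))))
    {m ε : ℝ} (hm : 0 ≤ m) (hε₀ : 0 < ε) (hε₁ : ε ≤ 1) :
    truncatedIntegral F m ε = ∫ p in Set.Ioc (-m) m ×ˢ Set.Ioc ε (1 / ε), Function.uncurry F p
      ∂(volume.prod (volume.restrict (Set.Ioi 0))) := by
  have hε : ε ≤ 1 / ε := hε₁.trans (one_le_one_div hε₀ hε₁)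
  have hsub : Set.Ioc ε (1 / ε) ⊆ Set.Ioi 0 := fun v hv => hε₀.trans hv.1
  rw [setIntegral_prod _ hF.integrableOn, Measure.restrict_restrict_of_subset hsub,
    truncatedIntegral, intervalIntegral.integral_of_le (by linarith)]
  simp only [intervalIntegral.integral_of_le hε, Function.uncurry_apply_pair]

lemma eventually_truncation_bounds :
    ∀ᶠ p : ℝ × ℝ in atTop ×ˢ 𝓝[>] 0, 0 ≤ p.1 ∧ 0 < p.2 ∧ p.2 ≤ 1 :=
  (eventually_ge_atTop 0).prod_mk (Ioc_mem_nhdsGT one_pos)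

lemma tendsto_truncatedIntegral {F : ℝ → ℝ → ℝ}
    (hF : Integrable (Function.uncurry F) (volume.prod (volume.restrict (Set.Ioi 0)))) :
    Tendsto (fun p : ℝ × ℝ => truncatedIntegral F p.1 p.2) (atTop ×ˢ 𝓝[>] 0)
      (𝓝 (∫ u, ∫ v in Set.Ioi 0, F u v)) := by
  rw [integral_integral hF]
  refine (aecover_Ioc_prod_Ioc.integral_tendsto_of_countably_generated hF).congr' ?_
  filter_upwards [eventually_truncation_bounds] with p ⟨hm, hε₀, hε₁⟩
  exact (truncatedIntegral_eq_setIntegral hF hm hε₀ hε₁).symm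

lemma tendsto_integral_truncatedIntegral [SFinite μ] {G : α → ℝ → ℝ → ℝ}
    (hG : Integrable (Function.uncurry fun z => Function.uncurry (G z))
      (μ.prod (volume.prod (volume.restrict (Set.Ioi 0))))) :
    Tendsto (fun p : ℝ × ℝ => ∫ z, truncatedIntegral (G z) p.1 p.2 ∂μ) (atTop ×ˢ 𝓝[>] 0)
      (𝓝 (∫ z, (∫ u, ∫ v in Set.Ioi 0, G z u v) ∂μ)) := by
  have hsection : ∀ᵐ z ∂μ, Integrable (Function.uncurry (G z))
      (volume.prod (volume.restrict (Set.Ioi 0))) := hG.prod_right_ae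
  rw [integral_congr_ae (hsection.mono fun z hz => integral_integral hz)]
  refine (tendsto_integral_setIntegral_of_aecover aecover_Ioc_prod_Ioc hG).congr' ?_
  filter_upwards [eventually_truncation_bounds] with p ⟨hm, hε₀, hε₁⟩
  exact integral_congr_ae (hsection.mono fun z hz =>
    (truncatedIntegral_eq_setIntegral hz hm hε₀ hε₁).symm)

end Truncation

section ScaleMixture

/-- The `r`-dimensional Gaussian kernel of standard deviation `v` at squared distance `q`, up to a
constant and weighted by the improper scale prior `dv / v`. -/
noncomputable def scaleKernel (r q v : ℝ) : ℝ :=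
  v ^ (-(r + 1)) * exp (-(1 / (2 * v ^ 2)) * q)

variable {r q A B c v : ℝ}

lemma scaleKernel_nonneg (hv : 0 ≤ v) : 0 ≤ scaleKernel r q v := by
  unfold scaleKernel
  positivity

lemma measurable_scaleKernel (r : ℝ) : Measurable fun p : ℝ × ℝ => scaleKernel r p.1 p.2 := by
  unfold scaleKernel
  fun_prop

/-- The scale kernel is the integrand of `Γ(r / 2)` in the variable `v⁻²`. -/
lemma comp_rpow_neg_two_eqOn_scaleKernel (r q : ℝ) :
    Set.EqOn (fun v : ℝ => (|(-2 : ℝ)| * v ^ ((-2 : ℝ) - 1)) •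
      (1 / 2 * ((v ^ (-2 : ℝ)) ^ (r / 2 - 1) * exp (-(q / 2 * v ^ (-2 : ℝ))))))
      (scaleKernel r q) (Set.Ioi 0) := by
  intro v (hv : 0 < v)
  simp only [scaleKernel, smul_eq_mul, abs_neg, Nat.abs_ofNat]
  rw [← rpow_mul hv.le, show -(r + 1) = (-2 - 1) + -2 * (r / 2 - 1) by ring, rpow_add hv,
    rpow_neg hv.le 2, rpow_two,
    show -(q / 2 * (v ^ 2)⁻¹) = -(1 / (2 * v ^ 2)) * q by field_simp]
  ring

lemma integrableOn_scaleKernel (hr : 0 < r) (hq : 0 < q) :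
    IntegrableOn (scaleKernel r q) (Set.Ioi 0) := by
  have hgamma : IntegrableOn (fun t : ℝ => t ^ (r / 2 - 1) * exp (-(q / 2 * t))) (Set.Ioi 0) := by
    simpa only [rpow_one, neg_mul] using integrableOn_rpow_mul_exp_neg_mul_rpow (s := r / 2 - 1)
      (p := 1) (b := q / 2) (by linarith) one_pos (by positivity)
  exact ((integrableOn_Ioi_comp_rpow_iff _ (p := -2) (by norm_num)).2
    (hgamma.const_mul (1 / 2))).congr_fun (comp_rpow_neg_two_eqOn_scaleKernel r q) measurableSet_Ioi

lemma integral_scaleKernel (hr : 0 < r) (hq : 0 < q) :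
    ∫ v in Set.Ioi 0, scaleKernel r q v = 2 ^ (r / 2 - 1) * Gamma (r / 2) * q ^ (-(r / 2)) := by
  rw [← setIntegral_congr_fun measurableSet_Ioi (comp_rpow_neg_two_eqOn_scaleKernel r q),
    integral_comp_rpow_Ioi (fun t : ℝ => 1 / 2 * (t ^ (r / 2 - 1) * exp (-(q / 2 * t))))
      (by norm_num),
    integral_const_mul, integral_rpow_mul_exp_neg_mul_Ioi (by positivity) (by positivity),
    one_div_div, div_rpow two_pos.le hq.le, rpow_neg hq.le, rpow_sub_one two_ne_zero]
  ring

lemma integral_scaleKernel_pos (hr : 0 < r) (hq : 0 < q) :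
    0 < ∫ v in Set.Ioi 0, scaleKernel r q v := by
  rw [integral_scaleKernel hr hq]
  have := Gamma_pos_of_pos (half_pos hr)
  positivity

lemma scaleKernel_mul_sq_add (r A B c v x : ℝ) : scaleKernel r (A * (x - c) ^ 2 + B) v =
    scaleKernel r B v * exp (-(A / (2 * v ^ 2)) * (x - c) ^ 2) := by
  rw [scaleKernel, scaleKernel, mul_assoc, ← exp_add]
  ring_nf

lemma integrable_scaleKernel_mul_sq_add (hA : 0 < A) (hv : 0 < v) :
    Integrable fun x : ℝ => scaleKernel r (A * (x - c) ^ 2 + B) v := by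
  simp only [scaleKernel_mul_sq_add]
  exact ((integrable_exp_neg_mul_sq (by positivity)).comp_sub_right c).const_mul _

lemma integral_scaleKernel_mul_sq_add (hv : 0 < v) :
    ∫ x : ℝ, scaleKernel (r + 1) (A * (x - c) ^ 2 + B) v = √(2 * π / A) * scaleKernel r B v := by
  simp only [scaleKernel_mul_sq_add]
  rw [integral_const_mul, integral_sub_right_eq_self
      (fun x : ℝ => exp (-(A / (2 * v ^ 2)) * x ^ 2)), integral_gaussian,
    show π / (A / (2 * v ^ 2)) = v ^ 2 * (2 * π / A) by field_simp, sqrt_mul (sq_nonneg v),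
    sqrt_sq hv.le, scaleKernel, scaleKernel, neg_add_rev (r + 1), rpow_add hv, rpow_neg_one]
  field_simp

lemma integrable_uncurry_scaleKernel_mul_sq_add (hr : 0 < r) (hA : 0 < A) (hB : 0 < B) :
    Integrable (Function.uncurry fun x : ℝ => scaleKernel (r + 1) (A * (x - c) ^ 2 + B))
      (volume.prod (volume.restrict (Set.Ioi 0))) := by
  have hmeas : Measurable
      (Function.uncurry fun x : ℝ => scaleKernel (r + 1) (A * (x - c) ^ 2 + B)) :=
    (measurable_scaleKernel (r + 1)).comp
      (f := fun p : ℝ × ℝ => (A * (p.1 - c) ^ 2 + B, p.2)) (by fun_prop)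
  rw [integrable_prod_iff' hmeas.aestronglyMeasurable]
  constructor
  · filter_upwards [ae_restrict_mem measurableSet_Ioi] with v hv
    exact integrable_scaleKernel_mul_sq_add hA hv
  · refine IntegrableOn.congr_fun ((integrableOn_scaleKernel hr hB).const_mul √(2 * π / A))
      (fun v (hv : 0 < v) => ?_) measurableSet_Ioi
    simp only [Function.uncurry_apply_pair, norm_of_nonneg (scaleKernel_nonneg hv.le),
      integral_scaleKernel_mul_sq_add hv]

lemma integral_integral_scaleKernel_mul_sq_add (hr : 0 < r) (hA : 0 < A) (hB : 0 < B) :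
    ∫ x : ℝ, ∫ v in Set.Ioi 0, scaleKernel (r + 1) (A * (x - c) ^ 2 + B) v =
      √(2 * π / A) * ∫ v in Set.Ioi 0, scaleKernel r B v := by
  rw [integral_integral_swap (integrable_uncurry_scaleKernel_mul_sq_add hr hA hB),
    setIntegral_congr_fun measurableSet_Ioi fun v hv => integral_scaleKernel_mul_sq_add hv,
    integral_const_mul]

end ScaleMixture

section Student

/-- The density at `t` of the Student distribution with `ν` degrees of freedom, location `μ₀` and
scale `s`. -/
noncomputable def studentPDFReal (ν μ₀ s t : ℝ) : ℝ :=
  Gamma ((ν + 1) / 2) / (Gamma (ν / 2) * √(π * ν) * s) *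
    (1 + ((t - μ₀) / s) ^ 2 / ν) ^ (-(ν + 1) / 2)

/-- The density at `z` obtained by integrating the weight `F z u v` over the truncated ranges
`|u| ≤ m`, `ε ≤ v ≤ 1 / ε` and normalizing in `z`. -/
noncomputable def truncatedPosterior (F : ℝ → ℝ → ℝ → ℝ) (m ε z : ℝ) : ℝ :=
  truncatedIntegral (F z) m ε / ∫ z', truncatedIntegral (F z') m ε

variable {ν A D b : ℝ} {c : ℝ → ℝ}

lemma integral_scaleKernel_div_eq_studentPDFReal (hν : 0 < ν) (hD : 0 < D) (hb : 0 < b)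
    (l z : ℝ) :
    (∫ v in Set.Ioi 0, scaleKernel (ν + 1) (D⁻¹ * (z - l) ^ 2 + b) v) /
      (√(2 * π / D⁻¹) * ∫ v in Set.Ioi 0, scaleKernel ν b v) =
        studentPDFReal ν l √(1 / ν * b * D) z := by
  have := Gamma_pos_of_pos (half_pos hν)
  have hfactor : D⁻¹ * (z - l) ^ 2 + b = b * (1 + (z - l) ^ 2 / (b * D)) := by field_simp; ring
  have hsquare : ((z - l) / √(1 / ν * b * D)) ^ 2 / ν = (z - l) ^ 2 / (b * D) := by
    rw [div_pow, sq_sqrt (by positivity)]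
    field_simp
  have hscale : √(π * ν) * √(1 / ν * b * D) = √(π * D) * √b := by
    rw [← sqrt_mul (by positivity), ← sqrt_mul (by positivity)]
    congr 1
    field_simp
  have hnormal : √(2 * π / D⁻¹) = √2 * √(π * D) := by
    rw [← sqrt_mul two_pos.le, div_inv_eq_mul, mul_assoc]
  rw [integral_scaleKernel (by positivity) (by positivity), integral_scaleKernel hν hb,
    studentPDFReal, hsquare, mul_assoc (Gamma (ν / 2)), hscale, hnormal, hfactor,
    mul_rpow hb.le (by positivity), ← neg_div,
    show (ν + 1) / 2 - 1 = ν / 2 - 1 + 1 / 2 by ring, rpow_add two_pos, ← sqrt_eq_rpow,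
    show -(ν + 1) / 2 = -(ν / 2) - 1 / 2 by ring, rpow_sub hb, ← sqrt_eq_rpow]
  field_simp

lemma integrable_uncurry_scaleKernel_quadratic (hν : 0 < ν) (hA : 0 < A) (hD : 0 < D) (hb : 0 < b)
    (hc : Measurable c) (l : ℝ) :
    Integrable (Function.uncurry fun z => Function.uncurry fun u =>
        scaleKernel (ν + 1 + 1) (A * (u - c z) ^ 2 + (D⁻¹ * (z - l) ^ 2 + b)))
      (volume.prod (volume.prod (volume.restrict (Set.Ioi 0)))) := by
  have hmeas : Measurable (Function.uncurry fun z => Function.uncurry fun u =>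
      scaleKernel (ν + 1 + 1) (A * (u - c z) ^ 2 + (D⁻¹ * (z - l) ^ 2 + b))) :=
    (measurable_scaleKernel (ν + 1 + 1)).comp (f := fun p : ℝ × ℝ × ℝ =>
      (A * (p.2.1 - c p.1) ^ 2 + (D⁻¹ * (p.1 - l) ^ 2 + b), p.2.2)) (by fun_prop)
  have hsection (z : ℝ) := integrable_uncurry_scaleKernel_mul_sq_add (r := ν + 1) (c := c z)
    (B := D⁻¹ * (z - l) ^ 2 + b) (by positivity) hA (by positivity)
  rw [integrable_prod_iff hmeas.aestronglyMeasurable]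
  refine ⟨ae_of_all _ hsection, ?_⟩
  refine (((integrable_uncurry_scaleKernel_mul_sq_add (c := l) hν (inv_pos.2 hD)
    hb).integral_prod_left).const_mul √(2 * π / A)).congr (ae_of_all _ fun z => ?_)
  have hnonneg : ∀ᵐ p : ℝ × ℝ ∂volume.prod (volume.restrict (Set.Ioi 0)),
      0 ≤ scaleKernel (ν + 1 + 1) (A * (p.1 - c z) ^ 2 + (D⁻¹ * (z - l) ^ 2 + b)) p.2 :=
    (Measure.quasiMeasurePreserving_snd.ae (ae_restrict_mem measurableSet_Ioi)).mono
      fun p (hp : 0 < p.2) => scaleKernel_nonneg hp.le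
  calc √(2 * π / A) * ∫ v in Set.Ioi 0, scaleKernel (ν + 1) (D⁻¹ * (z - l) ^ 2 + b) v
    _ = ∫ u, ∫ v in Set.Ioi 0, scaleKernel (ν + 1 + 1)
          (A * (u - c z) ^ 2 + (D⁻¹ * (z - l) ^ 2 + b)) v :=
      (integral_integral_scaleKernel_mul_sq_add (by positivity) hA (by positivity)).symm
    _ = _ := integral_integral (hsection z)
    _ = _ := integral_congr_ae (hnonneg.mono fun p hp => (norm_of_nonneg hp).symm)

lemma tendsto_truncatedPosterior_scaleKernel (hν : 0 < ν) (hA : 0 < A) (hD : 0 < D) (hb : 0 < b)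
    (hc : Measurable c) (l z : ℝ) :
    Tendsto (fun p : ℝ × ℝ => truncatedPosterior (fun z u =>
        scaleKernel (ν + 1 + 1) (A * (u - c z) ^ 2 + (D⁻¹ * (z - l) ^ 2 + b))) p.1 p.2 z)
      (atTop ×ˢ 𝓝[>] 0) (𝓝 (studentPDFReal ν l √(1 / ν * b * D) z)) := by
  have hlik (z : ℝ) : ∫ u, ∫ v in Set.Ioi 0, scaleKernel (ν + 1 + 1)
        (A * (u - c z) ^ 2 + (D⁻¹ * (z - l) ^ 2 + b)) v =
      √(2 * π / A) * ∫ v in Set.Ioi 0, scaleKernel (ν + 1) (D⁻¹ * (z - l) ^ 2 + b) v :=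
    integral_integral_scaleKernel_mul_sq_add (by positivity) hA (by positivity)
  have hnum := tendsto_truncatedIntegral <| integrable_uncurry_scaleKernel_mul_sq_add (c := c z)
    (r := ν + 1) (B := D⁻¹ * (z - l) ^ 2 + b) (by positivity) hA (by positivity)
  have hden := tendsto_integral_truncatedIntegral <|
    integrable_uncurry_scaleKernel_quadratic hν hA hD hb hc l
  simp only [hlik, integral_const_mul,
    integral_integral_scaleKernel_mul_sq_add hν (inv_pos.2 hD) hb] at hnum hden
  have hA' : √(2 * π / A) ≠ 0 := by positivity
  have hevidence : √(2 * π / D⁻¹) * ∫ v in Set.Ioi 0, scaleKernel ν b v ≠ 0 :=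
    mul_ne_zero (by positivity) (integral_scaleKernel_pos hν hb).ne'
  have hlim := hnum.div hden (mul_ne_zero hA' hevidence)
  rwa [mul_div_mul_left _ _ hA', integral_scaleKernel_div_eq_studentPDFReal hν hD hb] at hlim

end Student

section SchurComplement

open scoped ComplexOrder in
lemma posDef_schurComplement₂₂ {m n 𝕜 : Type*} [Finite m] [Fintype n] [DecidableEq n]
    [RCLike 𝕜] {A : Matrix m m 𝕜} {B : Matrix m n 𝕜} {D : Matrix n n 𝕜}
    (hΔ : (fromBlocks A B Bᴴ D).PosDef) : (A - B * D⁻¹ * Bᴴ).PosDef := by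
  have := Fintype.ofFinite m
  have hD : D.PosDef := hΔ.submatrix Sum.inr_injective
  let := hD.isUnit.invertible
  refine .of_dotProduct_mulVec_pos ((IsHermitian.fromBlocks₂₂ A B hD.1).1 hΔ.1) fun x hx => ?_
  have hne : Sum.elim x (-((D⁻¹ * Bᴴ) *ᵥ x)) ≠ 0 := fun h =>
    hx (funext fun i => congrFun h (Sum.inl i))
  have hpos := hΔ.dotProduct_mulVec_pos hne
  rwa [dotProduct_mulVec, schur_complement_eq₂₂ A B _ _ hD.1, add_neg_cancel, dotProduct_zero,
    zero_add, ← dotProduct_mulVec] at hpos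

variable {m n R : Type*} [Fintype m] [Fintype n] [DecidableEq m] [DecidableEq n] [CommRing R]

lemma dotProduct_inv_fromBlocks_mulVec {A : Matrix m m R} {B : Matrix m n R} {D : Matrix n n R}
    (hD : D.IsSymm) (hDu : IsUnit D) (hΔ : IsUnit (fromBlocks A B Bᵀ D)) (x : m → R) (y : n → R) :
    Sum.elim x y ⬝ᵥ (fromBlocks A B Bᵀ D)⁻¹ *ᵥ Sum.elim x y =
      (x - B *ᵥ D⁻¹ *ᵥ y) ⬝ᵥ (A - B * D⁻¹ * Bᵀ)⁻¹ *ᵥ (x - B *ᵥ D⁻¹ *ᵥ y) + y ⬝ᵥ D⁻¹ *ᵥ y := by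
  let := hDu.invertible
  let := hΔ.invertible
  let := invertibleOfFromBlocks₂₂Invertible A B Bᵀ D
  have hadjoint (w : m → R) : (B *ᵥ D⁻¹ *ᵥ y) ⬝ᵥ w = y ⬝ᵥ D⁻¹ *ᵥ Bᵀ *ᵥ w := by
    rw [dotProduct_comm, ← dotProduct_transpose_mulVec, dotProduct_comm,
      ← dotProduct_transpose_mulVec, transpose_nonsing_inv, hD.eq]
  rw [← invOf_eq_nonsing_inv (fromBlocks A B Bᵀ D), invOf_fromBlocks₂₂_eq, fromBlocks_mulVec,
    sumElim_dotProduct_sumElim]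
  simp only [invOf_eq_nonsing_inv, Sum.elim_comp_inl, Sum.elim_comp_inr, neg_mulVec, add_mulVec,
    ← mulVec_mulVec, mulVec_sub, dotProduct_add, dotProduct_neg, dotProduct_sub, sub_dotProduct,
    hadjoint]
  ring

end SchurComplement

section Kriging

variable {ι : Type*} {τ f₀ : ℝ} {k f y : ι → ℝ} {S : Matrix ι ι ℝ}

/-- The covariance matrix of a random field at a new site, of variance `τ`, followed by observed
sites: `S` is the covariance of the observations and `k` their covariance with the new value. -/
def jointCovariance (τ : ℝ) (k : ι → ℝ) (S : Matrix ι ι ℝ) : Matrix (Unit ⊕ ι) (Unit ⊕ ι) ℝ :=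
  fromBlocks (of fun _ _ => τ) (of fun _ j => k j) (of fun i _ => k i) S

lemma posDef_of_jointCovariance (hΔ : (jointCovariance τ k S).PosDef) : S.PosDef :=
  hΔ.submatrix Sum.inr_injective

variable [Fintype ι] [DecidableEq ι]

/-- The squared Mahalanobis norm `xᵀ S⁻¹ x` of `x` for the covariance matrix `S`. -/
noncomputable def mahalanobisSq (S : Matrix ι ι ℝ) (x : ι → ℝ) : ℝ :=
  x ⬝ᵥ S⁻¹ *ᵥ x

/-- The generalized least-squares estimate of `u` in the model `y = u • f + noise` with noise
covariance `S`. -/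
noncomputable def glsCoeff (S : Matrix ι ι ℝ) (f y : ι → ℝ) : ℝ :=
  (f ⬝ᵥ S⁻¹ *ᵥ y) / mahalanobisSq S f

/-- The residual sum of squares of the generalized least-squares fit of `y` by a multiple of `f`;
by the normal equations, only one of the two factors needs to be a residual. -/
noncomputable def glsResidual (S : Matrix ι ι ℝ) (f y : ι → ℝ) : ℝ :=
  (y - glsCoeff S f y • f) ⬝ᵥ S⁻¹ *ᵥ y

/-- The universal kriging predictor at a site with trend `f₀` and covariances `k`, from
observations `y` with trend `f` and covariance `S`. -/
noncomputable def krigingMean (k : ι → ℝ) (S : Matrix ι ι ℝ) (f₀ : ℝ) (f y : ι → ℝ) : ℝ :=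
  glsCoeff S f y * f₀ + k ⬝ᵥ S⁻¹ *ᵥ (y - glsCoeff S f y • f)

/-- The universal kriging variance at a site with variance `τ`, trend `f₀` and covariances `k`,
from observations with trend `f` and covariance `S`. -/
noncomputable def krigingVariance (τ : ℝ) (k : ι → ℝ) (S : Matrix ι ι ℝ) (f₀ : ℝ) (f : ι → ℝ) : ℝ :=
  τ - mahalanobisSq S k + (f₀ - f ⬝ᵥ S⁻¹ *ᵥ k) ^ 2 / mahalanobisSq S f

lemma mahalanobisSq_pos (hS : S.PosDef) {x : ι → ℝ} (hx : x ≠ 0) : 0 < mahalanobisSq S x :=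
  hS.inv.dotProduct_mulVec_pos hx

lemma dotProduct_inv_mulVec_comm (hS : S.IsHermitian) (x y : ι → ℝ) :
    x ⬝ᵥ S⁻¹ *ᵥ y = y ⬝ᵥ S⁻¹ *ᵥ x := by
  rw [← dotProduct_transpose_mulVec, ← conjTranspose_eq_transpose_of_trivial, hS.inv.eq]

lemma mahalanobisSq_sub_smul (hS : S.PosDef) (hf : f ≠ 0) (y : ι → ℝ) (u : ℝ) :
    mahalanobisSq S (y - u • f) =
      mahalanobisSq S f * (u - glsCoeff S f y) ^ 2 + glsResidual S f y := by
  have hnormal : f ⬝ᵥ S⁻¹ *ᵥ y = glsCoeff S f y * mahalanobisSq S f :=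
    (div_mul_cancel₀ _ (mahalanobisSq_pos hS hf).ne').symm
  rw [glsResidual, mahalanobisSq]
  simp only [mulVec_sub, mulVec_smul, dotProduct_sub, sub_dotProduct, dotProduct_smul,
    smul_dotProduct, smul_eq_mul, dotProduct_inv_mulVec_comm hS.1 y f, hnormal,
    show f ⬝ᵥ S⁻¹ *ᵥ f = mahalanobisSq S f from rfl]
  ring

lemma glsResidual_pos (hS : S.PosDef) (hf : f ≠ 0) (hy : ∀ u : ℝ, y ≠ u • f) :
    0 < glsResidual S f y := by
  have h := mahalanobisSq_sub_smul hS hf y (glsCoeff S f y)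
  rw [sub_self, zero_pow two_ne_zero, mul_zero, zero_add] at h
  exact h ▸ mahalanobisSq_pos hS (sub_ne_zero.2 (hy _))

lemma schurComplement_jointCovariance (τ : ℝ) (k : ι → ℝ) (S : Matrix ι ι ℝ) :
    (of fun _ _ => τ) - (of fun _ j => k j : Matrix Unit ι ℝ) * S⁻¹ * (of fun _ j => k j)ᵀ =
      diagonal fun _ => τ - mahalanobisSq S k := by
  ext
  rw [mahalanobisSq, dotProduct_mulVec]
  rfl

lemma sub_mahalanobisSq_pos (hΔ : (jointCovariance τ k S).PosDef) : 0 < τ - mahalanobisSq S k := by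
  have h := posDef_schurComplement₂₂ (B := of fun _ j => k j) hΔ
  rw [conjTranspose_eq_transpose_of_trivial, schurComplement_jointCovariance] at h
  simpa using h.diag_pos (i := ())

lemma krigingVariance_pos (hΔ : (jointCovariance τ k S).PosDef) (hf : f ≠ 0) :
    0 < krigingVariance τ k S f₀ f := by
  have := sub_mahalanobisSq_pos hΔ
  have := mahalanobisSq_pos (posDef_of_jointCovariance hΔ) hf
  unfold krigingVariance
  positivity

lemma mahalanobisSq_jointCovariance (hΔ : (jointCovariance τ k S).PosDef) (z : ℝ) (h : ι → ℝ) :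
    mahalanobisSq (jointCovariance τ k S) (Sum.elim (fun _ => z) h) =
      (z - k ⬝ᵥ S⁻¹ *ᵥ h) ^ 2 / (τ - mahalanobisSq S k) + mahalanobisSq S h := by
  have hS := posDef_of_jointCovariance hΔ
  have hblock := dotProduct_inv_fromBlocks_mulVec (A := of fun _ _ => τ) (B := of fun _ j => k j)
    ((conjTranspose_eq_transpose_of_trivial S).symm.trans hS.1) hS.isUnit hΔ.isUnit (fun _ => z) h
  have hinnovation : (fun _ => z) - (of fun _ j => k j : Matrix Unit ι ℝ) *ᵥ S⁻¹ *ᵥ h =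
      fun _ => z - k ⬝ᵥ S⁻¹ *ᵥ h := rfl
  rw [schurComplement_jointCovariance, hinnovation, inv_subsingleton (diagonal _)] at hblock
  refine hblock.trans ?_
  simp only [mahalanobisSq, dotProduct, mulVec_diagonal, diagonal_apply_eq, Ring.inverse_eq_inv',
    Finset.univ_unique, Finset.sum_const, Finset.card_singleton, one_smul]
  ring

lemma sub_mul_sq_div_add_mul_sq {δ a : ℝ} (hδ : 0 < δ) (ha : 0 < a) (e w t : ℝ) :
    (w - e * t) ^ 2 / δ + a * t ^ 2 =
      (e ^ 2 / δ + a) * (t - e / δ / (e ^ 2 / δ + a) * w) ^ 2 + (δ + e ^ 2 / a)⁻¹ * w ^ 2 := by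
  have : e ^ 2 + δ * a ≠ 0 := by positivity
  have : δ * a + e ^ 2 ≠ 0 := by positivity
  field_simp
  ring

lemma exists_mahalanobisSq_residual_eq (hΔ : (jointCovariance τ k S).PosDef) (hf : f ≠ 0)
    (f₀ : ℝ) (y : ι → ℝ) : ∃ A > 0, ∃ c : ℝ → ℝ, Measurable c ∧ ∀ z u : ℝ,
      mahalanobisSq (jointCovariance τ k S)
          (Sum.elim (fun _ => z) y - u • Sum.elim (fun _ => f₀) f) =
        A * (u - c z) ^ 2 + ((krigingVariance τ k S f₀ f)⁻¹ * (z - krigingMean k S f₀ f y) ^ 2 +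
          glsResidual S f y) := by
  have hS := posDef_of_jointCovariance hΔ
  have ha := mahalanobisSq_pos hS hf
  have hδ := sub_mahalanobisSq_pos hΔ
  set a := mahalanobisSq S f
  set δ := τ - mahalanobisSq S k
  set e := f₀ - f ⬝ᵥ S⁻¹ *ᵥ k with he
  set l := krigingMean k S f₀ f y with hl
  refine ⟨e ^ 2 / δ + a, by positivity,
    fun z => glsCoeff S f y + e / δ / (e ^ 2 / δ + a) * (z - l), by fun_prop, fun z u => ?_⟩
  have hresidual : Sum.elim (fun _ => z) y - u • Sum.elim (fun _ => f₀) f =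
      Sum.elim (fun _ : Unit => z - u * f₀) (y - u • f) := by
    ext (_ | _) <;> rfl
  have hinnovation : z - u * f₀ - k ⬝ᵥ S⁻¹ *ᵥ (y - u • f) = z - l - e * (u - glsCoeff S f y) := by
    simp only [hl, he, krigingMean, mulVec_sub, mulVec_smul, dotProduct_sub, dotProduct_smul,
      smul_eq_mul, dotProduct_inv_mulVec_comm hS.1 f k]
    ring
  rw [hresidual, mahalanobisSq_jointCovariance hΔ, hinnovation, mahalanobisSq_sub_smul hS hf,
    ← add_assoc, sub_mul_sq_div_add_mul_sq hδ ha, krigingVariance]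
  ring

end Kriging

theorem gaussian_mixture_random_mean_variance_student_posterior_general {ι : Type*} [Fintype ι]
    [DecidableEq ι] {r τ : ℝ} (hr : 2 < r) {k : ι → ℝ} {S : Matrix ι ι ℝ}
    (hΔ : (jointCovariance τ k S).PosDef) (f₀ : ℝ) {f y : ι → ℝ} (hf : f ≠ 0)
    (hy : ∀ u : ℝ, y ≠ u • f) (z : ℝ) :
    Tendsto (fun p : ℝ × ℝ => truncatedPosterior (fun z u => scaleKernel r
        (mahalanobisSq (jointCovariance τ k S)
          (Sum.elim (fun _ => z) y - u • Sum.elim (fun _ => f₀) f))) p.1 p.2 z)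
      (atTop ×ˢ 𝓝[>] 0)
      (𝓝 (studentPDFReal (r - 2) (krigingMean k S f₀ f y)
        √(1 / (r - 2) * glsResidual S f y * krigingVariance τ k S f₀ f) z)) := by
  obtain ⟨ν, rfl⟩ : ∃ ν, r = ν + 1 + 1 := ⟨r - 2, by ring⟩
  rw [show ν + 1 + 1 - 2 = ν by ring]
  obtain ⟨A, hA, c, hc, hquadratic⟩ := exists_mahalanobisSq_residual_eq hΔ hf f₀ y
  simp only [hquadratic]
  exact tendsto_truncatedPosterior_scaleKernel (by linarith) hA (krigingVariance_pos hΔ hf)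
    (glsResidual_pos (posDef_of_jointCovariance hΔ) hf hy) hc _ z

/-- Theorem 3 of the paper (univariate form): for the prior field `Y_x = U + V W_x` with `U`
uniform on `[−m, m]` and `V` uniform on `[ε, 1/ε]`, the conditional density `g_{m,ε}(z)` of
`Y_x` given the `n ≥ 3` observations `y`, along any sequences `m_j → ∞` and `ε_j → 0⁺`,
converges to the density of the univariate Student distribution with `n − 2` degrees of
freedom, location `μ + kᵀ Σ⁻¹ (y − μ𝟙)` and scale
`√( (1/(n−2)) ((y − μ𝟙)ᵀ Σ⁻¹ y) (1 − kᵀ Σ⁻¹ k + (1 − 𝟙ᵀ Σ⁻¹ k)²/(𝟙ᵀ Σ⁻¹ 𝟙)) )`. -/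
theorem gaussian_mixture_random_mean_variance_student_posterior
    (n : ℕ) (hn : 3 ≤ n)
    (S : Matrix (Fin n) (Fin n) ℝ) (hS : S.PosDef)
    (k : Fin n → ℝ)
    (Δ : Matrix (Unit ⊕ Fin n) (Unit ⊕ Fin n) ℝ)
    (hΔdef : Δ =
      Matrix.fromBlocks (Matrix.of fun _ _ => (1 : ℝ)) (Matrix.of fun _ j => k j)
        (Matrix.of fun i _ => k i) S)
    (hΔ : Δ.PosDef)
    (y : Fin n → ℝ)
    (onen : Fin n → ℝ) (honen : onen = fun _ => (1 : ℝ))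
    (hy : ¬ ∃ c : ℝ, y = c • onen)
    (one1 : Unit ⊕ Fin n → ℝ) (hone1 : one1 = fun _ => (1 : ℝ))
    (μ : ℝ) (hμ : μ = (onen ⬝ᵥ S⁻¹ *ᵥ y) / (onen ⬝ᵥ S⁻¹ *ᵥ onen))
    (s : ℝ)
    (hs : s = Real.sqrt ((1 / ((n : ℝ) - 2)) * ((y - μ • onen) ⬝ᵥ S⁻¹ *ᵥ y) *
      (1 - k ⬝ᵥ S⁻¹ *ᵥ k + (1 - onen ⬝ᵥ S⁻¹ *ᵥ k) ^ 2 / (onen ⬝ᵥ S⁻¹ *ᵥ onen))))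
    (g : ℝ → ℝ → ℝ → ℝ)
    (hg : ∀ m > (0 : ℝ), ∀ ε : ℝ, 0 < ε → ε < 1 → ∀ z : ℝ, g m ε z =
      (∫ u in (-m)..m, ∫ v in ε..(1 / ε),
          v ^ (-((n : ℝ) + 1)) *
            Real.exp (-(1 / (2 * v ^ 2)) *
              ((Sum.elim (fun _ => z) y - u • one1) ⬝ᵥ
                Δ⁻¹ *ᵥ (Sum.elim (fun _ => z) y - u • one1)))) /
        (∫ z' : ℝ, ∫ u in (-m)..m, ∫ v in ε..(1 / ε),
          v ^ (-((n : ℝ) + 1)) *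
            Real.exp (-(1 / (2 * v ^ 2)) *
              ((Sum.elim (fun _ => z') y - u • one1) ⬝ᵥ
                Δ⁻¹ *ᵥ (Sum.elim (fun _ => z') y - u • one1))))) :
    ∀ z : ℝ, ∀ mseq εseq : ℕ → ℝ,
      (∀ j, 0 < mseq j) → (∀ j, 0 < εseq j ∧ εseq j < 1) →
      Tendsto mseq atTop atTop →
      Tendsto εseq atTop (nhdsWithin 0 (Set.Ioi 0)) →
      Tendsto (fun j => g (mseq j) (εseq j) z) atTop
        (nhds
          (Real.Gamma ((((n : ℝ) - 2) + 1) / 2) /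
              (Real.Gamma (((n : ℝ) - 2) / 2) * Real.sqrt (π * ((n : ℝ) - 2)) * s) *
            (1 + ((z - (μ + k ⬝ᵥ S⁻¹ *ᵥ (y - μ • onen))) / s) ^ 2 / ((n : ℝ) - 2)) ^
              (-(((n : ℝ) - 2) + 1) / 2))) := by
  subst hΔdef honen hone1 hμ hs
  intro z mseq εseq hm_pos hε_mem hm hε
  have hones : Sum.elim (fun _ => 1) (fun _ => 1) = fun _ : Unit ⊕ Fin n => (1 : ℝ) :=
    Sum.elim_lam_const_lam_const 1
  have hr : (2 : ℝ) < n := by exact_mod_cast hn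
  have hf : (fun _ : Fin n => (1 : ℝ)) ≠ 0 := fun h => one_ne_zero (congrFun h ⟨0, by lia⟩)
  have hlim := (gaussian_mixture_random_mean_variance_student_posterior_general hr hΔ 1 hf
    (not_exists.1 hy) z).comp (hm.prodMk hε)
  rw [krigingMean, mul_one, hones] at hlim
  exact hlim.congr fun j => (hg _ (hm_pos j) _ (hε_mem j).1 (hε_mem j).2 z).symm
end

section
/- Let η be the uniform (Lebesgue) probability measure on [0,1]. Then the operator L_η is its own inverse: for every probability measure m on [0,1], L_η(L_η(m)) = m. -/
open MeasureTheory Set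

/-- The tail distribution `F_m(α) := m((α,1])` of a probability measure `m` on `[0,1]`. -/
noncomputable def tailDist (m : Measure ℝ) (α : ℝ) : ℝ := (m (Set.Ioc α 1)).toReal

/-- The generalized inverse `S⁻¹(t) := sup {α ∈ [0,1] : S(α) > t}` (with `sup ∅ := 0`). -/
noncomputable def genInv (S : ℝ → ℝ) (t : ℝ) : ℝ :=
  sSup {α ∈ Set.Icc (0 : ℝ) 1 | t < S α}

/-!
If `S` is decreasing and right-continuous with `S(0) ≤ 1` and `S(1) = 0`, then
`α < S⁻¹(t) ↔ t < S(α)` for `α, t ∈ [0,1]`. Hence `(S⁻¹)⁻¹(α)`, the supremum of the `t ∈ [0,1]` with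
`α < S⁻¹(t)`, is the supremum of the `t ∈ [0,1]` with `t < S(α)`, namely `S(α)`. For the uniform
measure `K` is the identity on `[0,1]`, so applying `L_η` twice inverts the tail distribution twice,
and a probability measure on `[0,1]` is determined by its tail distribution.
-/

open ProbabilityTheory Filter Topology

section GeneralizedInverse

variable {S T : ℝ → ℝ} {α t : ℝ}

theorem genInv_mem_Icc (S : ℝ → ℝ) (t : ℝ) : genInv S t ∈ Icc (0 : ℝ) 1 :=
  ⟨Real.sSup_nonneg fun _ hβ => hβ.1.1, Real.sSup_le (fun _ hβ => hβ.1.2) zero_le_one⟩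

theorem genInv_congr (h : EqOn S T (Icc 0 1)) : genInv S = genInv T := by
  funext t
  exact congrArg sSup (sep_ext_iff.2 fun α hα => by rw [h hα])

theorem genInv_le_of_le (hS : AntitoneOn S (Icc 0 1)) (hα : α ∈ Icc (0 : ℝ) 1) (h : S α ≤ t) :
    genInv S t ≤ α := by
  refine Real.sSup_le (fun β ⟨hβ, htβ⟩ => ?_) hα.1
  by_contra! hαβ
  exact htβ.not_ge ((hS hα hβ hαβ.le).trans h)

theorem lt_genInv_of_lt (hcont : ContinuousWithinAt S (Ioi α) α) (h_one : S 1 ≤ t)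
    (hα : α ∈ Icc (0 : ℝ) 1) (h : t < S α) : α < genInv S t := by
  have hα_lt : α < 1 := hα.2.lt_of_ne (by rintro rfl; exact h.not_ge h_one)
  obtain ⟨β, htβ, hαβ, hβ_one⟩ :=
    ((hcont.eventually_const_lt h).and (Ioc_mem_nhdsGT hα_lt)).exists
  exact hαβ.trans_le (le_csSup ⟨1, fun _ h => h.1.2⟩ ⟨⟨hα.1.trans hαβ.le, hβ_one⟩, htβ⟩)

theorem lt_genInv_iff (hS : AntitoneOn S (Icc 0 1)) (hcont : ContinuousWithinAt S (Ioi α) α)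
    (h_one : S 1 ≤ t) (hα : α ∈ Icc (0 : ℝ) 1) : α < genInv S t ↔ t < S α :=
  ⟨fun h => lt_of_not_ge fun hle => h.not_ge (genInv_le_of_le hS hα hle),
    lt_genInv_of_lt hcont h_one hα⟩

theorem genInv_eq_of_forall_lt_iff {s : ℝ} (hs : s ∈ Icc (0 : ℝ) 1)
    (h : ∀ α ∈ Icc (0 : ℝ) 1, t < S α ↔ α < s) : genInv S t = s := by
  have hset : {α ∈ Icc (0 : ℝ) 1 | t < S α} = Ico 0 s := by
    ext α
    exact ⟨fun ⟨hα, ht⟩ => ⟨hα.1, (h α hα).1 ht⟩, fun hα =>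
      have hα' : α ∈ Icc (0 : ℝ) 1 := ⟨hα.1, hα.2.le.trans hs.2⟩
      ⟨hα', (h α hα').2 hα.2⟩⟩
  rw [genInv, hset]
  rcases hs.1.eq_or_lt with rfl | hs_pos
  · rw [Ico_self, Real.sSup_empty]
  · exact csSup_Ico hs_pos

theorem genInv_genInv (hS : AntitoneOn S (Icc 0 1)) (hcont : ContinuousWithinAt S (Ioi α) α)
    (h_zero : S 0 ≤ 1) (h_one : S 1 = 0) (hα : α ∈ Icc (0 : ℝ) 1) :
    genInv (genInv S) α = S α := by
  have hSα : S α ∈ Icc (0 : ℝ) 1 :=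
    ⟨h_one.ge.trans (hS hα (right_mem_Icc.2 zero_le_one) hα.2),
      (hS (left_mem_Icc.2 zero_le_one) hα hα.1).trans h_zero⟩
  exact genInv_eq_of_forall_lt_iff hSα fun t ht =>
    lt_genInv_iff hS hcont (h_one.trans_le ht.1) hα

end GeneralizedInverse

section TailDistribution

variable {m : Measure ℝ} {α : ℝ}

theorem tailDist_of_one_le (m : Measure ℝ) (hα : 1 ≤ α) : tailDist m α = 0 := by
  rw [tailDist, Ioc_eq_empty hα.not_gt, measure_empty, ENNReal.toReal_zero]

theorem antitone_tailDist (m : Measure ℝ) [IsFiniteMeasure m] : Antitone (tailDist m) :=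
  fun _ _ h => measureReal_mono (Ioc_subset_Ioc_left h)

theorem continuousWithinAt_Ioi_tailDist (m : Measure ℝ) [IsFiniteMeasure m] (α : ℝ) :
    ContinuousWithinAt (tailDist m) (Ioi α) α := by
  have hUnion : ⋃ β : Ioi α, Ioc (β : ℝ) 1 = Ioc α 1 := by
    ext x
    simp only [mem_iUnion, mem_Ioc, Subtype.exists, mem_Ioi, exists_and_right, exists_prop]
    exact and_congr_left' ⟨fun ⟨β, hαβ, hβx⟩ => hαβ.trans hβx, exists_between⟩
  have hmeasure : Tendsto (fun β : Ioi α => m (Ioc (β : ℝ) 1)) atBot (𝓝 (m (Ioc α 1))) := by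
    rw [← hUnion]
    exact tendsto_measure_iUnion_atBot fun _ _ h => Ioc_subset_Ioc_left h
  exact (tendsto_comp_coe_Ioi_atBot (.of_dense α)).1
    ((ENNReal.tendsto_toReal (measure_ne_top m _)).comp hmeasure)

theorem tailDist_eq_measureReal_Ioi (hm : m (Ioi 1) = 0) (α : ℝ) :
    tailDist m α = m.real (Ioi α) := by
  have hIoi : Ioc α 1 =ᵐ[m] Ioi α := by
    rw [← Ioi_inter_Iic]
    exact inter_ae_eq_left_of_ae_eq_univ (ae_eq_univ.2 (by rwa [compl_Iic]))
  exact measureReal_congr hIoi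

variable [IsProbabilityMeasure m]

theorem genInv_genInv_tailDist (hα : α ∈ Icc (0 : ℝ) 1) :
    genInv (genInv (tailDist m)) α = tailDist m α :=
  genInv_genInv ((antitone_tailDist m).antitoneOn _) (continuousWithinAt_Ioi_tailDist m α)
    measureReal_le_one (tailDist_of_one_le m le_rfl) hα

theorem cdf_eq_one_sub_tailDist (hm : m (Ioi 1) = 0) (α : ℝ) :
    cdf m α = 1 - tailDist m α := by
  rw [tailDist_eq_measureReal_Ioi hm, cdf_eq_real, ← compl_Iic,
    probReal_compl_eq_one_sub measurableSet_Iic, sub_sub_cancel]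

theorem tailDist_of_neg (hm : m (Icc 0 1)ᶜ = 0) (hα : α < 0) : tailDist m α = 1 := by
  have hIcc : m (Icc 0 1) = 1 := (prob_compl_eq_zero_iff measurableSet_Icc).1 hm
  have hIoc : m (Ioc α 1) = 1 := le_antisymm prob_le_one
    (hIcc.ge.trans (measure_mono (Icc_subset_Ioc hα le_rfl)))
  rw [tailDist, hIoc, ENNReal.toReal_one]

theorem eq_of_eqOn_tailDist {m₁ m₂ : Measure ℝ} [IsProbabilityMeasure m₁] [IsProbabilityMeasure m₂]
    (hm₁ : m₁ (Icc 0 1)ᶜ = 0) (hm₂ : m₂ (Icc 0 1)ᶜ = 0)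
    (h : EqOn (tailDist m₁) (tailDist m₂) (Icc 0 1)) : m₁ = m₂ := by
  have htail (α : ℝ) : tailDist m₁ α = tailDist m₂ α := by
    rcases lt_or_ge α 0 with hneg | hnonneg
    · rw [tailDist_of_neg hm₁ hneg, tailDist_of_neg hm₂ hneg]
    rcases le_total α 1 with hle | hge
    · exact h ⟨hnonneg, hle⟩
    · rw [tailDist_of_one_le m₁ hge, tailDist_of_one_le m₂ hge]
  have hIoi : Ioi (1 : ℝ) ⊆ (Icc 0 1)ᶜ := fun x hx hx' => hx'.2.not_gt hx
  refine Measure.eq_of_cdf m₁ m₂ (StieltjesFunction.ext fun α => ?_)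
  rw [cdf_eq_one_sub_tailDist (measure_mono_null hIoi hm₁),
    cdf_eq_one_sub_tailDist (measure_mono_null hIoi hm₂), htail]

end TailDistribution

theorem toReal_volume_restrict_Icc_zero_one {u : ℝ} (hu : u ∈ Icc (0 : ℝ) 1) :
    (volume.restrict (Icc (0 : ℝ) 1) (Icc 0 u)).toReal = u := by
  rw [Measure.restrict_eq_self volume (Icc_subset_Icc_right hu.2), Real.volume_Icc, sub_zero,
    ENNReal.toReal_ofReal hu.1]

/-- When `η` is the uniform (Lebesgue) probability measure on `[0,1]` with cumulative
distribution function `K`, the operator `L_η` is its own inverse: if `m' = L_η(m)` (i.e. `m'`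
has tail distribution `K ∘ F_m⁻¹`) and `m'' = L_η(m')`, then `m'' = m`. -/
theorem uniform_eta_operator_involutive
    (η : Measure ℝ) (hη : η = volume.restrict (Set.Icc (0 : ℝ) 1))
    (K : ℝ → ℝ) (hK : K = fun u => (η (Set.Icc (0 : ℝ) u)).toReal)
    (m : Measure ℝ) (hm : IsProbabilityMeasure m) (hmsupp : m (Set.Icc (0 : ℝ) 1)ᶜ = 0)
    (m' : Measure ℝ) (hm' : IsProbabilityMeasure m') (hm'supp : m' (Set.Icc (0 : ℝ) 1)ᶜ = 0)
    (m'' : Measure ℝ) (hm'' : IsProbabilityMeasure m'')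
    (hm''supp : m'' (Set.Icc (0 : ℝ) 1)ᶜ = 0)
    (htail1 : ∀ t ∈ Set.Icc (0 : ℝ) 1, tailDist m' t = K (genInv (tailDist m) t))
    (htail2 : ∀ t ∈ Set.Icc (0 : ℝ) 1, tailDist m'' t = K (genInv (tailDist m') t)) :
    m'' = m := by
  have hK_id (S : ℝ → ℝ) (t : ℝ) : K (genInv S t) = genInv S t := by
    rw [hK, hη]
    exact toReal_volume_restrict_Icc_zero_one (genInv_mem_Icc S t)
  have htail' : EqOn (tailDist m') (genInv (tailDist m)) (Icc 0 1) := fun t ht => by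
    rw [htail1 t ht, hK_id]
  refine eq_of_eqOn_tailDist hm''supp hmsupp fun α hα => ?_
  calc
    tailDist m'' α = genInv (tailDist m') α := by rw [htail2 α hα, hK_id]
    _ = genInv (genInv (tailDist m)) α := by rw [genInv_congr htail']
    _ = tailDist m α := genInv_genInv_tailDist hα
end

section
/- Let r, n ≥ 1, let Δ be an (n+r)×(n+r) real positive definite matrix, let y ∈ ℝ^n, and let 𝟙 denote the all-ones vector in ℝ^{n+r}. For m > 0 and z ∈ ℝ^r define g_m(z) := [∫_{−m}^{m} exp(−½ ((z, y) − u𝟙)ᵀ Δ⁻¹ ((z, y) − u𝟙)) du] / [∫_{ℝ^r} ∫_{−m}^{m} exp(−½ ((z', y) − u𝟙)ᵀ Δ⁻¹ ((z', y) − u𝟙)) du dz'], where (z, y) ∈ ℝ^{n+r} is the concatenated vector. Then for every z ∈ ℝ^r, as m → ∞, g_m(z) converges to exp(−½ ( (z,y)ᵀ Δ⁻¹ (z,y) − (𝟙ᵀ Δ⁻¹ (z,y))² / (𝟙ᵀ Δ⁻¹ 𝟙) )) / ∫_{ℝ^r} exp(−½ ( (z',y)ᵀ Δ⁻¹ (z',y)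 − (𝟙ᵀ Δ⁻¹ (z',y))² / (𝟙ᵀ Δ⁻¹ 𝟙) )) dz'. -/
open Matrix MeasureTheory Real Filter

/-!
The limit is what an improper uniform prior on the whole line gives for `u`. With positive definite
`A`, the weight `exp (-½ (w - u • v)ᵀ A (w - u • v))`, `w = (z, y)`, is jointly integrable in
`(z, u)`: it is a Gaussian evaluated along an affine map of `(z, u)`, and this map is injective
because `v` does not vanish on the fixed coordinates `y`. So the integral over `[-m, m]` may be
replaced by the one over `ℝ` in the limit, in the numerator and, by dominated convergence, in the
denominator. Completing the square in `u` evaluates the integral over `ℝ` as the residual weight of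
`(z, y)` times a Gaussian constant independent of `z`, which cancels in the quotient.
-/

section GaussianIntegrability

variable {E F : Type*} [NormedAddCommGroup E] [NormedSpace ℝ E] [FiniteDimensional ℝ E]
  [MeasurableSpace E] [BorelSpace E] [NormedAddCommGroup F]

theorem integrable_exp_neg_mul_sq_norm (μ : Measure E) [μ.IsAddHaarMeasure] {c : ℝ}
    (hc : 0 < c) : Integrable (fun x : E => exp (-c * ‖x‖ ^ 2)) μ := by
  cases subsingleton_or_nontrivial E
  · have : IsFiniteMeasure μ := ⟨(Set.subsingleton_univ.isCompact).measure_lt_top⟩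
    exact .of_finite
  · refine (integrable_fun_norm_addHaar μ (f := fun t : ℝ => exp (-c * t ^ 2))).2 ?_
    simpa only [rpow_natCast, smul_eq_mul] using integrableOn_rpow_mul_exp_neg_mul_sq hc
      (s := (Module.finrank ℝ E - 1 : ℕ)) (neg_one_lt_zero.trans_le (Nat.cast_nonneg _))

theorem integrable_exp_neg_mul_sq_norm_of_antilipschitzWith (μ : Measure E) [μ.IsAddHaarMeasure]
    {K : NNReal} {f : E → F} (hf : AntilipschitzWith K f) (hcont : Continuous f) {c : ℝ}
    (hc : 0 < c) : Integrable (fun x => exp (-c * ‖f x‖ ^ 2)) μ := by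
  have hnorm (x : E) : ‖x‖ ≤ K * (‖f x‖ + ‖f 0‖) := by
    simpa using (hf.le_mul_dist x 0).trans
      (mul_le_mul_of_nonneg_left (dist_le_norm_add_norm _ _) K.coe_nonneg)
  have hsq (x : E) : ‖x‖ ^ 2 ≤ 2 * (K + 1) ^ 2 * (‖f x‖ ^ 2 + ‖f 0‖ ^ 2) :=
    calc ‖x‖ ^ 2 ≤ ((K + 1) * (‖f x‖ + ‖f 0‖)) ^ 2 := by
          gcongr
          exact (hnorm x).trans (by gcongr; simp)
      _ = (K + 1) ^ 2 * (‖f x‖ + ‖f 0‖) ^ 2 := mul_pow _ _ _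
      _ ≤ (K + 1) ^ 2 * (2 * (‖f x‖ ^ 2 + ‖f 0‖ ^ 2)) := by gcongr; exact add_sq_le
      _ = _ := by ring
  -- `K + 1` instead of `K` keeps the rate meaningful when `K = 0`.
  have hbound := (integrable_exp_neg_mul_sq_norm μ
    (c := c / (2 * ((K : ℝ) + 1) ^ 2)) (by positivity)).const_mul (exp (c * ‖f 0‖ ^ 2))
  refine hbound.mono' (by fun_prop) (.of_forall fun x => ?_)
  rw [norm_of_nonneg (exp_pos _).le, ← exp_add, exp_le_exp]
  have hdiv : c / (2 * ((K : ℝ) + 1) ^ 2) * ‖x‖ ^ 2 ≤ c * (‖f x‖ ^ 2 + ‖f 0‖ ^ 2) := by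
    rw [div_mul_eq_mul_div, div_le_iff₀ (by positivity)]
    linarith [mul_le_mul_of_nonneg_left (hsq x) hc.le]
  linarith

end GaussianIntegrability

section QuadraticForm

variable {ι : Type*} [Fintype ι] {A : Matrix ι ι ℝ}

open scoped MatrixOrder Matrix.Norms.L2Operator in
theorem exists_injective_dotProduct_mulVec_eq_sq_norm (hA : A.PosDef) :
    ∃ L : (ι → ℝ) →ₗ[ℝ] EuclideanSpace ℝ ι,
      Function.Injective L ∧ ∀ x, x ⬝ᵥ A *ᵥ x = ‖L x‖ ^ 2 := by
  classical
  obtain ⟨B, hB⟩ := CStarAlgebra.nonneg_iff_eq_star_mul_self.mp hA.posSemidef.nonneg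
  let L : (ι → ℝ) →ₗ[ℝ] EuclideanSpace ℝ ι :=
    (WithLp.linearEquiv 2 ℝ (ι → ℝ)).symm.toLinearMap ∘ₗ B.mulVecLin
  have hL (x : ι → ℝ) : x ⬝ᵥ A *ᵥ x = ‖L x‖ ^ 2 := by
    rw [hB, star_eq_conjTranspose, conjTranspose_eq_transpose_of_trivial, ← mulVec_mulVec,
      dotProduct_mulVec, vecMul_transpose, EuclideanSpace.real_norm_sq_eq]
    simp [L, dotProduct, sq]
  refine ⟨L, (injective_iff_map_eq_zero L).2 fun x hx => ?_, hL⟩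
  by_contra hne
  simpa [hL, hx] using hA.dotProduct_mulVec_pos hne

/-- The unnormalised density at `w` of the centered Gaussian vector with precision matrix
(inverse covariance) `A`. -/
noncomputable def gaussianWeight (A : Matrix ι ι ℝ) (w : ι → ℝ) : ℝ :=
  exp (-(1 / 2) * (w ⬝ᵥ A *ᵥ w))

/-- The generalised least squares residual of `w` after regression on the drift vector `v` with
precision matrix `A`. For positive definite `A` and `v ≠ 0` it is the minimum over `u` of the
quadratic form of `A` at `w - u • v`, written in closed form. -/
noncomputable def residualForm (A : Matrix ι ι ℝ) (v w : ι → ℝ) : ℝ :=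
  w ⬝ᵥ A *ᵥ w - (v ⬝ᵥ A *ᵥ w) ^ 2 / (v ⬝ᵥ A *ᵥ v)

theorem integrable_gaussianWeight_comp_affineMap (hA : A.PosDef) {E : Type*}
    [NormedAddCommGroup E] [NormedSpace ℝ E] [FiniteDimensional ℝ E] [MeasurableSpace E]
    [BorelSpace E] (μ : Measure E) [μ.IsAddHaarMeasure] {T : E →ᵃ[ℝ] ι → ℝ}
    (hT : Function.Injective T) : Integrable (fun x => gaussianWeight A (T x)) μ := by
  obtain ⟨L, hL, hnorm⟩ := exists_injective_dotProduct_mulVec_eq_sq_norm hA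
  obtain ⟨K, hK⟩ := AffineMap.antilipschitzWith_of_finiteDimensional
    (f := L.toAffineMap.comp T) (hL.comp hT)
  simpa [gaussianWeight, hnorm] using integrable_exp_neg_mul_sq_norm_of_antilipschitzWith μ hK
    (AffineMap.continuous_of_finiteDimensional _) one_half_pos

theorem dotProduct_mulVec_sub_smul_eq_residualForm_add (hA : A.IsSymm) {v : ι → ℝ}
    (hv : v ⬝ᵥ A *ᵥ v ≠ 0) (w : ι → ℝ) (u : ℝ) :
    (w - u • v) ⬝ᵥ A *ᵥ (w - u • v) =
      residualForm A v w +
        (v ⬝ᵥ A *ᵥ v) * (u - (v ⬝ᵥ A *ᵥ w) / (v ⬝ᵥ A *ᵥ v)) ^ 2 := by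
  have hcomm : w ⬝ᵥ A *ᵥ v = v ⬝ᵥ A *ᵥ w := by
    rw [dotProduct_mulVec, ← mulVec_transpose, hA.eq, dotProduct_comm]
  simp only [residualForm, mulVec_sub, mulVec_smul, sub_dotProduct, dotProduct_sub,
    smul_dotProduct, dotProduct_smul, smul_eq_mul, hcomm]
  field_simp
  ring

theorem integral_gaussianWeight_sub_smul (hA : A.IsSymm) {v : ι → ℝ}
    (hv : 0 < v ⬝ᵥ A *ᵥ v) (w : ι → ℝ) :
    ∫ u : ℝ, gaussianWeight A (w - u • v) =
      exp (-(1 / 2) * residualForm A v w) * √(2 * π / (v ⬝ᵥ A *ᵥ v)) := by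
  let a := v ⬝ᵥ A *ᵥ v
  let t := (v ⬝ᵥ A *ᵥ w) / a
  calc ∫ u : ℝ, gaussianWeight A (w - u • v)
      = ∫ u : ℝ, exp (-(1 / 2) * residualForm A v w) * exp (-(a / 2) * (u - t) ^ 2) := by
        congr with u
        rw [gaussianWeight, dotProduct_mulVec_sub_smul_eq_residualForm_add hA hv.ne', ← exp_add]
        congr 1
        simp only [a, t]
        ring
    _ = exp (-(1 / 2) * residualForm A v w) * ∫ u : ℝ, exp (-(a / 2) * u ^ 2) := by
        rw [integral_const_mul, integral_sub_right_eq_self fun u : ℝ => exp (-(a / 2) * u ^ 2)]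
    _ = exp (-(1 / 2) * residualForm A v w) * √(2 * π / a) := by
        rw [integral_gaussian, div_div_eq_mul_div, mul_comm π]

theorem integrable_gaussianWeight_sub_smul (hA : A.PosDef) {v : ι → ℝ} (hv : v ≠ 0)
    (w : ι → ℝ) : Integrable fun u : ℝ => gaussianWeight A (w - u • v) := by
  let T : ℝ →ᵃ[ℝ] ι → ℝ := AffineMap.const ℝ ℝ w - (LinearMap.toSpanSingleton ℝ _ v).toAffineMap
  have hT_apply (u : ℝ) : T u = w - u • v := by simp [T]
  have hT : Function.Injective T := fun u u' h => smul_left_injective ℝ hv <| by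
    simpa [hT_apply] using h
  simpa only [hT_apply] using integrable_gaussianWeight_comp_affineMap hA volume hT

theorem integrable_gaussianWeight_sumElim_sub_smul {κ : Type*} [Fintype κ]
    {A : Matrix (ι ⊕ κ) (ι ⊕ κ) ℝ} (hA : A.PosDef) {v : ι ⊕ κ → ℝ} (hv : v ∘ Sum.inr ≠ 0)
    (y : κ → ℝ) :
    Integrable (Function.uncurry fun (z : ι → ℝ) (u : ℝ) => gaussianWeight A (Sum.elim z y - u • v))
      (volume.prod volume) := by
  let S : (ι → ℝ) →ₗ[ℝ] ι ⊕ κ → ℝ :=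
    (LinearEquiv.sumArrowLequivProdArrow ι κ ℝ ℝ).symm.toLinearMap ∘ₗ LinearMap.inl ℝ _ _
  let T : (ι → ℝ) × ℝ →ᵃ[ℝ] ι ⊕ κ → ℝ := AffineMap.const ℝ _ (Sum.elim (0 : ι → ℝ) y) +
    (S.coprod (-LinearMap.toSpanSingleton ℝ _ v)).toAffineMap
  have hT_apply (p : (ι → ℝ) × ℝ) : T p = Sum.elim p.1 y - p.2 • v := by
    ext (i | k) <;> simp [T, S, sub_eq_add_neg]
  have hT : Function.Injective T := by
    rintro ⟨z, u⟩ ⟨z', u'⟩ h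
    simp only [hT_apply] at h
    have hu : u = u' := smul_left_injective ℝ hv <| funext fun k => by
      simpa using congrFun h (Sum.inr k)
    subst hu
    have hz : z = z' := (Sum.elim_eq_iff.1 (sub_left_injective h)).1
    rw [hz]
  have hint := integrable_gaussianWeight_comp_affineMap hA (volume.prod volume) hT
  simpa only [hT_apply, Function.uncurry_def] using hint

end QuadraticForm

section ImproperFubini

variable {α ι E : Type*} [MeasurableSpace α] {μ : Measure α} [SFinite μ] {ν : Measure ℝ}
  [SFinite ν] {l : Filter ι} [l.IsCountablyGenerated] {a b : ι → ℝ}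
  [NormedAddCommGroup E] [NormedSpace ℝ E]

theorem tendsto_integral_intervalIntegral {f : α → ℝ → E}
    (hf : Integrable (Function.uncurry f) (μ.prod ν)) (ha : Tendsto a l atBot)
    (hb : Tendsto b l atTop) :
    Tendsto (fun i => ∫ x, ∫ u in a i..b i, f x u ∂ν ∂μ) l (nhds (∫ x, ∫ u, f x u ∂ν ∂μ)) := by
  refine tendsto_integral_filter_of_dominated_convergence (fun x => ∫ u, ‖f x u‖ ∂ν)
    (.of_forall fun i => ?_) (.of_forall fun i => ?_) hf.integral_norm_prod_left ?_
  · have hmeas (s : Set ℝ) : AEStronglyMeasurable (fun x => ∫ u in s, f x u ∂ν) μ := by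
      have hfs := hf.1.restrict (s := Set.univ ×ˢ s)
      rw [← Measure.prod_restrict, Measure.restrict_univ] at hfs
      exact hfs.integral_prod_right'
    exact (hmeas _).sub (hmeas _)
  · filter_upwards [hf.prod_right_ae] with x hx
    exact intervalIntegral.norm_integral_le_integral_norm_uIoc.trans
      (setIntegral_le_integral hx.norm (.of_forall fun _ => norm_nonneg _))
  · filter_upwards [hf.prod_right_ae] with x hx
    exact intervalIntegral_tendsto_integral hx ha hb

end ImproperFubini

theorem uniform_mean_mixture_conditional_density_limit_general {ι κ : Type*} [Fintype ι]
    [Fintype κ] {A : Matrix (ι ⊕ κ) (ι ⊕ κ) ℝ} (hA : A.PosDef) {v : ι ⊕ κ → ℝ}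
    (hv : v ∘ Sum.inr ≠ 0) (y : κ → ℝ) (z : ι → ℝ) :
    Tendsto (fun m : ℝ => (∫ u in (-m)..m, gaussianWeight A (Sum.elim z y - u • v)) /
        ∫ z' : ι → ℝ, ∫ u in (-m)..m, gaussianWeight A (Sum.elim z' y - u • v)) atTop
      (nhds (exp (-(1 / 2) * residualForm A v (Sum.elim z y)) /
        ∫ z' : ι → ℝ, exp (-(1 / 2) * residualForm A v (Sum.elim z' y)))) := by
  have hv₀ : v ≠ 0 := by rintro rfl; exact hv rfl
  have hvAv : 0 < v ⬝ᵥ A *ᵥ v := by simpa using hA.dotProduct_mulVec_pos hv₀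
  have hjoint := integrable_gaussianWeight_sumElim_sub_smul hA hv y
  have hnum := intervalIntegral_tendsto_integral
    (integrable_gaussianWeight_sub_smul hA hv₀ (Sum.elim z y)) tendsto_neg_atTop_atBot tendsto_id
  have hden := tendsto_integral_intervalIntegral hjoint tendsto_neg_atTop_atBot tendsto_id
  have hden_ne : ∫ z' : ι → ℝ, ∫ u : ℝ, gaussianWeight A (Sum.elim z' y - u • v) ≠ 0 := by
    rw [integral_integral hjoint]
    exact (integral_exp_pos hjoint).ne'
  have hlim := hnum.div hden hden_ne
  simp only [integral_gaussianWeight_sub_smul (isHermitian_iff_isSymm.1 hA.isHermitian) hvAv,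
    integral_mul_const] at hlim
  rwa [mul_div_mul_right _ _ (by positivity)] at hlim

/-- Limit of the conditional density of the random field `Y_x = U + W_x` with `U` uniform on
`[−m, m]`: as `m → ∞`, the conditional density `g_m(z)` of the field at `r` prediction points
given `n` observations `y` converges, for every `z ∈ ℝ^r`, to the stated Gaussian-type
expression. -/
theorem uniform_mean_mixture_conditional_density_limit
    (r n : ℕ) (hr : 1 ≤ r) (hn : 1 ≤ n)
    (Δ : Matrix (Fin r ⊕ Fin n) (Fin r ⊕ Fin n) ℝ) (hΔ : Δ.PosDef)
    (y : Fin n → ℝ)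
    (one : Fin r ⊕ Fin n → ℝ) (hone : one = fun _ => (1 : ℝ))
    (g : ℝ → (Fin r → ℝ) → ℝ)
    (hg : ∀ m > (0 : ℝ), ∀ z : Fin r → ℝ, g m z =
      (∫ u in (-m)..m,
          Real.exp (-(1 / 2) *
            ((Sum.elim z y - u • one) ⬝ᵥ Δ⁻¹ *ᵥ (Sum.elim z y - u • one)))) /
        (∫ z' : Fin r → ℝ, ∫ u in (-m)..m,
          Real.exp (-(1 / 2) *
            ((Sum.elim z' y - u • one) ⬝ᵥ Δ⁻¹ *ᵥ (Sum.elim z' y - u • one))))) :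
    ∀ z : Fin r → ℝ,
      Tendsto (fun m : ℝ => g m z) atTop
        (nhds
          (Real.exp (-(1 / 2) *
              ((Sum.elim z y ⬝ᵥ Δ⁻¹ *ᵥ Sum.elim z y) -
                (one ⬝ᵥ Δ⁻¹ *ᵥ Sum.elim z y) ^ 2 / (one ⬝ᵥ Δ⁻¹ *ᵥ one))) /
            ∫ z' : Fin r → ℝ,
              Real.exp (-(1 / 2) *
                ((Sum.elim z' y ⬝ᵥ Δ⁻¹ *ᵥ Sum.elim z' y) -
                  (one ⬝ᵥ Δ⁻¹ *ᵥ Sum.elim z' y) ^ 2 / (one ⬝ᵥ Δ⁻¹ *ᵥ one))))) := by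
  intro z
  subst hone
  have hone_ne : (fun _ => (1 : ℝ)) ∘ (Sum.inr : Fin n → Fin r ⊕ Fin n) ≠ 0 := fun h =>
    one_ne_zero (congrFun h ⟨0, hn⟩)
  exact (uniform_mean_mixture_conditional_density_limit_general hΔ.inv hone_ne y z).congr'
    ((eventually_gt_atTop 0).mono fun m hm => (hg m hm z).symm)
end
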